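/- Assume (A1) and (A2). Let Y(t) be a solution of the gradient flow of the relative entropy. If p_{1j} = p_{2j} for all j > 2 and y_1(0) = y_2(0), then there exists a constant C > 0 (depending on n, s, Y(0), the p_{ij} and β, but not on t) such that diam Y(t) ≤ C for all t ≥ 0. -/

import Mathlib

open Filter Topology

/-- The normalizing constant `Z = Σ_{k ≠ ℓ} β(|y_k - y_ℓ|²)`. -/
noncomputable def pairZ {E : Type*} [NormedAddCommGroup E] (β : ℝ → ℝ) {n : ℕ}
    (Y : Fin n → E) : ℝ :=
  ∑ k : Fin n, ∑ l : Fin n, if k ≠ l then β (‖Y k - Y l‖ ^ 2) else 0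

/-- The low-dimensional similarity `q_{ij}(Y) = β(|y_i - y_j|²) / Z(Y)`. -/
noncomputable def qfun {E : Type*} [NormedAddCommGroup E] (β : ℝ → ℝ) {n : ℕ}
    (Y : Fin n → E) (i j : Fin n) : ℝ :=
  β (‖Y i - Y j‖ ^ 2) / pairZ β Y

/-- The derivative `(log β)'` on `[0, ∞)`. -/
noncomputable def lbd (β : ℝ → ℝ) : ℝ → ℝ :=
  fun x => derivWithin (fun y => Real.log (β y)) (Set.Ici 0) x

/-- `Y : ℝ → Fin n → E` is a solution of the gradient flow of the relative entropy:
`dy_i/dt = 4 Σ_{j ≠ i} (p_{ij} - q_{ij}(Y)) (y_i - y_j) (log β)'(|y_i - y_j|²)` for `t ≥ 0`. -/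
def IsGradFlow {E : Type*} [NormedAddCommGroup E] [NormedSpace ℝ E] (β : ℝ → ℝ) {n : ℕ}
    (p : Fin n → Fin n → ℝ) (Y : ℝ → Fin n → E) : Prop :=
  ∀ i : Fin n, ∀ t ∈ Set.Ici (0 : ℝ),
    HasDerivWithinAt (fun u => Y u i)
      (∑ j ∈ Finset.univ.filter (· ≠ i),
        (4 * (p i j - qfun β (Y t) i j) * lbd β (‖Y t i - Y t j‖ ^ 2)) • (Y t i - Y t j))
      (Set.Ici 0) t

/-- The diameter of the configuration `Y`, i.e. `max_{i,j} |y_i - y_j|`. -/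
noncomputable def diamY {E : Type*} [NormedAddCommGroup E] {n : ℕ} (Y : Fin n → E) : ℝ :=
  Metric.diam (Set.range Y)

/-!
The flow descends the cross entropy `log Z - ∑ p_{ij} log β(|y_i - y_j|²)`, which therefore stays
bounded above. Since `-log β → ∞` at infinity, points can drift apart only if `log Z → -∞`. If
exchanging `y_a` and `y_b` preserves both `p` and the initial configuration, then by uniqueness of
solutions it preserves the whole trajectory, so `y_a = y_b` for all time and `Z ≥ β(0)`.
-/

theorem eqOn_Ici_of_hasDerivWithinAt_of_locallyLipschitz {F : Type*} [NormedAddCommGroup F]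
    [NormedSpace ℝ F] {v : F → F} (hv : LocallyLipschitz v) {f g : ℝ → F} {a : ℝ}
    (hf : ∀ t ∈ Set.Ici a, HasDerivWithinAt f (v (f t)) (Set.Ici a) t)
    (hg : ∀ t ∈ Set.Ici a, HasDerivWithinAt g (v (g t)) (Set.Ici a) t)
    (hfg : f a = g a) : Set.EqOn f g (Set.Ici a) := by
  intro T hT
  have hf_cont : ContinuousOn f (Set.Icc a T) := fun t ht =>
    (hf t ht.1).continuousWithinAt.mono Set.Icc_subset_Ici_self
  have hg_cont : ContinuousOn g (Set.Icc a T) := fun t ht =>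
    (hg t ht.1).continuousWithinAt.mono Set.Icc_subset_Ici_self
  -- A locally Lipschitz field is Lipschitz on the compact union of the two trajectories.
  obtain ⟨K, hK⟩ := hv.locallyLipschitzOn.exists_lipschitzOnWith_of_compact
    ((isCompact_Icc.image_of_continuousOn hf_cont).union
      (isCompact_Icc.image_of_continuousOn hg_cont))
  exact ODE_solution_unique_of_mem_Icc_right (v := fun _ => v) (fun _ _ => hK)
    hf_cont (fun t ht => (hf t ht.1).mono (Set.Ici_subset_Ici.2 ht.1))
    (fun t ht => .inl (Set.mem_image_of_mem f (Set.Ico_subset_Icc_self ht)))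
    hg_cont (fun t ht => (hg t ht.1).mono (Set.Ici_subset_Ici.2 ht.1))
    (fun t ht => .inr (Set.mem_image_of_mem g (Set.Ico_subset_Icc_self ht)))
    hfg ⟨hT, le_rfl⟩

theorem bddBelow_image_Ici_of_tendsto_atTop {α R : Type*} [LinearOrder α] [TopologicalSpace α]
    [CompactIccSpace α] [LinearOrder R] [TopologicalSpace R] [ClosedIicTopology R]
    {φ : α → R} {a : α} (hφ : ContinuousOn φ (Set.Ici a)) (hlim : Tendsto φ atTop atTop) :
    BddBelow (φ '' Set.Ici a) := by
  have : Nonempty α := ⟨a⟩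
  have : Nonempty R := ⟨φ a⟩
  obtain ⟨r, hr⟩ := eventually_atTop.1 (hlim.eventually_ge_atTop (φ a))
  have hnear : BddBelow (φ '' Set.Icc a r) :=
    isCompact_Icc.bddBelow_image (hφ.mono Set.Icc_subset_Ici_self)
  have hfar : BddBelow (φ '' Set.Ici r) := ⟨φ a, Set.forall_mem_image.2 hr⟩
  refine (hnear.union hfar).mono ?_
  rw [← Set.image_union]
  exact Set.image_mono Set.Ici_subset_Icc_union_Ici

section PairEnergy

variable {ι : Type*} [Fintype ι] [DecidableEq ι]
  {E : Type*} [NormedAddCommGroup E]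

/-- The pair interaction energy `∑_{i ≠ j} w_{ij} φ(|y_i - y_j|²)`, summed over ordered pairs. It
covers both `pairZ` and the attractive part of the cross entropy. -/
def pairEnergy (w : ι → ι → ℝ) (φ : ℝ → ℝ) (Y : ι → E) : ℝ :=
  ∑ i, ∑ j with j ≠ i, w i j * φ (‖Y i - Y j‖ ^ 2)

theorem pairEnergy_neg (w : ι → ι → ℝ) (φ : ℝ → ℝ) (Y : ι → E) :
    pairEnergy w (fun x => -φ x) Y = -pairEnergy w φ Y := by
  simp only [pairEnergy, mul_neg, Finset.sum_neg_distrib]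

theorem pairEnergy_sub_const (w : ι → ι → ℝ) (φ : ℝ → ℝ) (m : ℝ) (Y : ι → E) :
    pairEnergy w (fun x => φ x - m) Y = pairEnergy w φ Y - (∑ i, ∑ j with j ≠ i, w i j) * m := by
  simp only [pairEnergy, mul_sub, Finset.sum_sub_distrib, Finset.sum_mul]

theorem mul_le_pairEnergy {w : ι → ι → ℝ} (hw : ∀ i j, i ≠ j → 0 ≤ w i j) {φ : ℝ → ℝ}
    (hφ : ∀ x, 0 ≤ x → 0 ≤ φ x) (Y : ι → E) {i j : ι} (hij : i ≠ j) :
    w i j * φ (‖Y i - Y j‖ ^ 2) ≤ pairEnergy w φ Y := by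
  have hterm : ∀ k, ∀ l ∈ ({l | l ≠ k} : Finset ι), 0 ≤ w k l * φ (‖Y k - Y l‖ ^ 2) :=
    fun k l hl => mul_nonneg (hw k l (Finset.mem_filter.1 hl).2.symm) (hφ _ (sq_nonneg _))
  calc w i j * φ (‖Y i - Y j‖ ^ 2)
      ≤ ∑ l with l ≠ i, w i l * φ (‖Y i - Y l‖ ^ 2) :=
        Finset.single_le_sum (f := fun l => w i l * φ (‖Y i - Y l‖ ^ 2)) (hterm i)
          (by simpa using hij.symm)
    _ ≤ pairEnergy w φ Y :=
        Finset.single_le_sum (f := fun k => ∑ l with l ≠ k, w k l * φ (‖Y k - Y l‖ ^ 2))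
          (fun k _ => Finset.sum_nonneg (hterm k)) (Finset.mem_univ i)

theorem exists_norm_sub_le_of_pairEnergy_le {w : ι → ι → ℝ} (hw : ∀ i j, i ≠ j → 0 < w i j)
    {φ : ℝ → ℝ} (hφ : ContinuousOn φ (Set.Ici 0)) (hlim : Tendsto φ atTop atTop) (e : ℝ) :
    ∃ C, 0 < C ∧ ∀ Y : ι → E, pairEnergy w φ Y ≤ e → ∀ i j, ‖Y i - Y j‖ ≤ C := by
  obtain ⟨m, hm⟩ := bddBelow_image_Ici_of_tendsto_atTop hφ hlim
  set W := ∑ i, ∑ j with j ≠ i, w i j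
  have hlarge : ∀ᶠ r : ℝ in atTop, 0 < r ∧ ∀ i j, m + (e - W * m) / w i j < φ (r ^ 2) :=
    (eventually_gt_atTop 0).and <| eventually_all.2 fun _ => eventually_all.2 fun _ =>
      (hlim.comp (tendsto_pow_atTop two_ne_zero)).eventually_gt_atTop _
  obtain ⟨C, hC⟩ := eventually_atTop.1 hlarge
  have hCpos : 0 < C := (hC C le_rfl).1
  refine ⟨C, hCpos, fun Y hY i j => ?_⟩
  rcases eq_or_ne i j with rfl | hij
  · simpa using hCpos.le
  by_contra! hfar
  have hpair : w i j * (φ (‖Y i - Y j‖ ^ 2) - m) ≤ e - W * m :=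
    calc w i j * (φ (‖Y i - Y j‖ ^ 2) - m)
        ≤ pairEnergy w (fun x => φ x - m) Y :=
          mul_le_pairEnergy (fun i j hij => (hw i j hij).le)
            (fun x hx => sub_nonneg.2 (hm (Set.mem_image_of_mem φ hx))) Y hij
      _ = pairEnergy w φ Y - W * m := pairEnergy_sub_const w φ m Y
      _ ≤ e - W * m := by gcongr
  have hfar_lt := (hC _ hfar.le).2 i j
  rw [← lt_sub_iff_add_lt', div_lt_iff₀' (hw i j hij)] at hfar_lt
  exact hfar_lt.not_ge hpair

theorem pairEnergy_comp_perm (φ : ℝ → ℝ) {w : ι → ι → ℝ} {σ : Equiv.Perm ι}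
    (hσ : ∀ i j, i ≠ j → w (σ i) (σ j) = w i j) (Y : ι → E) :
    pairEnergy w φ (Y ∘ σ) = pairEnergy w φ Y := by
  refine Fintype.sum_equiv σ _ _ fun i => Finset.sum_equiv σ (by simp) fun j hj => ?_
  rw [hσ i j (Finset.mem_filter.1 hj).2.symm, Function.comp_apply, Function.comp_apply]

/-- The gradient of `pairEnergy w φ` for symmetric `w`, with `ψ` the derivative of `φ`. The
factor `4` is a `2` from differentiating the square times a `2` from the two orders of each pair. -/
def pairGradient [NormedSpace ℝ E] (w : ι → ι → ℝ) (ψ : ℝ → ℝ) (Y : ι → E) : ι → E :=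
  fun i => ∑ j with j ≠ i, (4 * w i j * ψ (‖Y i - Y j‖ ^ 2)) • (Y i - Y j)

theorem pairGradient_comp_perm [NormedSpace ℝ E] (ψ : ℝ → ℝ) {w : ι → ι → ℝ} {σ : Equiv.Perm ι}
    (hσ : ∀ i j, i ≠ j → w (σ i) (σ j) = w i j) (Y : ι → E) :
    pairGradient w ψ (Y ∘ σ) = pairGradient w ψ Y ∘ σ := by
  funext i
  refine Finset.sum_equiv σ (by simp) fun j hj => ?_
  rw [hσ i j (Finset.mem_filter.1 hj).2.symm, Function.comp_apply, Function.comp_apply]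

end PairEnergy

section PairEnergyCalculus

variable {ι : Type*} [Fintype ι] {E : Type*} [NormedAddCommGroup E] [InnerProductSpace ℝ E]

theorem contDiff_comp_norm_sub_sq {k : WithTop ℕ∞} {φ : ℝ → ℝ} (hφ : ContDiffOn ℝ k φ (Set.Ici 0))
    (i j : ι) : ContDiff ℝ k fun Y : ι → E => φ (‖Y i - Y j‖ ^ 2) := by
  have hdist : ContDiff ℝ k fun Y : ι → E => ‖Y i - Y j‖ ^ 2 :=
    ContDiff.norm_sq ℝ (by fun_prop)
  exact contDiffOn_univ.1 (hφ.comp hdist.contDiffOn fun Y _ => sq_nonneg ‖Y i - Y j‖)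

variable [DecidableEq ι]

theorem contDiff_pairEnergy {k : WithTop ℕ∞} (w : ι → ι → ℝ) {φ : ℝ → ℝ}
    (hφ : ContDiffOn ℝ k φ (Set.Ici 0)) : ContDiff ℝ k (pairEnergy (E := E) w φ) :=
  ContDiff.sum fun i _ => ContDiff.sum fun j _ =>
    contDiff_const.mul (contDiff_comp_norm_sub_sq hφ i j)

theorem contDiff_pairGradient {k : WithTop ℕ∞} (w : ι → ι → ℝ) {ψ : ℝ → ℝ}
    (hψ : ContDiffOn ℝ k ψ (Set.Ici 0)) : ContDiff ℝ k (pairGradient (E := E) w ψ) :=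
  contDiff_pi.2 fun i => ContDiff.sum fun j _ =>
    (contDiff_const.mul (contDiff_comp_norm_sub_sq hψ i j)).smul (by fun_prop)

theorem sum_inner_pairGradient {w : ι → ι → ℝ} (hw : ∀ i j, w i j = w j i) (ψ : ℝ → ℝ)
    (Y V : ι → E) :
    ∑ i, inner ℝ (pairGradient w ψ Y i) (V i) = ∑ i, ∑ j with j ≠ i,
      w i j * (ψ (‖Y i - Y j‖ ^ 2) * (2 * inner ℝ (Y i - Y j) (V i - V j))) := by
  set a : ι → ι → ℝ := fun i j => 2 * w i j * ψ (‖Y i - Y j‖ ^ 2) * inner ℝ (Y i - Y j) (V i)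
    with ha
  have hswap : ∑ i, ∑ j with j ≠ i, a j i = ∑ i, ∑ j with j ≠ i, a i j :=
    Finset.sum_comm' (by simp [ne_comm])
  calc ∑ i, inner ℝ (pairGradient w ψ Y i) (V i)
      = ∑ i, ∑ j with j ≠ i, (a i j + a i j) := by
        refine Finset.sum_congr rfl fun i _ => ?_
        rw [pairGradient, sum_inner]
        refine Finset.sum_congr rfl fun j _ => ?_
        rw [real_inner_smul_left]
        ring
    _ = ∑ i, ∑ j with j ≠ i, (a i j + a j i) := by
        simp only [Finset.sum_add_distrib, hswap]
    _ = _ := by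
        refine Finset.sum_congr rfl fun i _ => Finset.sum_congr rfl fun j _ => ?_
        simp only [ha]
        rw [hw j i, norm_sub_rev (Y j), ← neg_sub (Y i) (Y j), inner_neg_left, inner_sub_right]
        ring

theorem hasDerivWithinAt_pairEnergy {w : ι → ι → ℝ} (hw : ∀ i j, w i j = w j i) {φ φ' : ℝ → ℝ}
    (hφ : ∀ x ∈ Set.Ici 0, HasDerivWithinAt φ (φ' x) (Set.Ici 0) x) {Y : ℝ → ι → E} {V : ι → E}
    {S : Set ℝ} {t : ℝ} (hY : HasDerivWithinAt Y V S t) :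
    HasDerivWithinAt (fun u => pairEnergy w φ (Y u))
      (∑ i, inner ℝ (pairGradient w φ' (Y t) i) (V i)) S t := by
  rw [sum_inner_pairGradient hw]
  rw [hasDerivWithinAt_pi] at hY
  refine HasDerivWithinAt.fun_sum fun i _ => HasDerivWithinAt.fun_sum fun j _ => ?_
  have hdist : HasDerivWithinAt (fun u => ‖Y u i - Y u j‖ ^ 2)
      (2 * inner ℝ (Y t i - Y t j) (V i - V j)) S t := ((hY i).fun_sub (hY j)).norm_sq
  have hφ_pair := hφ (‖Y t i - Y t j‖ ^ 2) (Set.mem_Ici.2 (sq_nonneg _))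
  exact (hφ_pair.comp t hdist fun u _ => sq_nonneg ‖Y u i - Y u j‖).const_mul _

end PairEnergyCalculus

section Kernel

variable {β : ℝ → ℝ}

theorem hasDerivWithinAt_log_lbd (hβpos : ∀ x, 0 ≤ x → 0 < β x)
    (hβ : DifferentiableOn ℝ β (Set.Ici 0)) :
    ∀ x ∈ Set.Ici 0, HasDerivWithinAt (fun y => Real.log (β y)) (lbd β x) (Set.Ici 0) x :=
  fun x hx => ((hβ x hx).log (hβpos x hx).ne').hasDerivWithinAt

theorem hasDerivWithinAt_mul_lbd (hβpos : ∀ x, 0 ≤ x → 0 < β x)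
    (hβ : DifferentiableOn ℝ β (Set.Ici 0)) :
    ∀ x ∈ Set.Ici 0, HasDerivWithinAt β (β x * lbd β x) (Set.Ici 0) x := by
  intro x hx
  have hexp := (hasDerivWithinAt_log_lbd hβpos hβ x hx).exp
  rw [Real.exp_log (hβpos x hx)] at hexp
  exact hexp.congr_of_mem (fun y hy => (Real.exp_log (hβpos y hy)).symm) hx

theorem contDiffOn_lbd (hβpos : ∀ x, 0 ≤ x → 0 < β x) (hβ : ContDiffOn ℝ 2 β (Set.Ici 0)) :
    ContDiffOn ℝ 1 (lbd β) (Set.Ici 0) :=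
  (hβ.log fun x hx => (hβpos x hx).ne').derivWithin (uniqueDiffOn_Ici 0) (by norm_num)

end Kernel

section Flow

variable {n : ℕ} {E : Type*} [NormedAddCommGroup E] {β : ℝ → ℝ} {p : Fin n → Fin n → ℝ}

theorem pairZ_eq_pairEnergy (β : ℝ → ℝ) (Y : Fin n → E) :
    pairZ β Y = pairEnergy (fun _ _ => 1) β Y := by
  simp only [pairZ, pairEnergy, one_mul, Finset.sum_filter, ne_comm]

theorem le_pairZ (hβpos : ∀ x, 0 ≤ x → 0 < β x) (Y : Fin n → E) {i j : Fin n} (hij : i ≠ j) :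
    β (‖Y i - Y j‖ ^ 2) ≤ pairZ β Y := by
  simpa [pairZ_eq_pairEnergy] using mul_le_pairEnergy (w := fun _ _ => 1)
    (fun _ _ _ => zero_le_one) (fun x hx => (hβpos x hx).le) Y hij

theorem pairZ_pos [Nontrivial (Fin n)] (hβpos : ∀ x, 0 ≤ x → 0 < β x) (Y : Fin n → E) :
    0 < pairZ β Y := by
  obtain ⟨i, j, hij⟩ := exists_pair_ne (Fin n)
  exact (hβpos _ (sq_nonneg _)).trans_le (le_pairZ hβpos Y hij)

/-- The cross entropy `-∑_{i ≠ j} p_{ij} log q_{ij}(Y)` of a normalized `p`, which is the relative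
entropy of `p` and `q(Y)` up to a constant. It is written in the form
`log Z - ∑_{i ≠ j} p_{ij} log β(|y_i - y_j|²)`, which `IsGradFlow` descends even for `∑ p_{ij} ≠ 1`.
-/
noncomputable def crossEntropy (β : ℝ → ℝ) (p : Fin n → Fin n → ℝ) (Y : Fin n → E) : ℝ :=
  Real.log (pairZ β Y) - pairEnergy p (fun x => Real.log (β x)) Y

/-- The vector field driving `IsGradFlow`, which is minus the gradient of `crossEntropy`. -/
noncomputable def flowField [NormedSpace ℝ E] (β : ℝ → ℝ) (p : Fin n → Fin n → ℝ)
    (Y : Fin n → E) : Fin n → E :=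
  fun i => ∑ j with j ≠ i,
    (4 * (p i j - qfun β Y i j) * lbd β (‖Y i - Y j‖ ^ 2)) • (Y i - Y j)

theorem flowField_eq_sub [NormedSpace ℝ E] (β : ℝ → ℝ) (p : Fin n → Fin n → ℝ) (Y : Fin n → E) :
    flowField β p Y = pairGradient p (lbd β) Y
      - (pairZ β Y)⁻¹ • pairGradient (fun _ _ => 1) (fun x => β x * lbd β x) Y := by
  funext i
  simp only [flowField, pairGradient, Pi.sub_apply, Pi.smul_apply, Finset.smul_sum, smul_smul,
    ← Finset.sum_sub_distrib, ← sub_smul, qfun]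
  refine Finset.sum_congr rfl fun j _ => ?_
  congr 1
  ring

theorem flowField_comp_perm [NormedSpace ℝ E] (β : ℝ → ℝ) {σ : Equiv.Perm (Fin n)}
    (hσ : ∀ i j, i ≠ j → p (σ i) (σ j) = p i j) (Y : Fin n → E) :
    flowField β p (Y ∘ σ) = flowField β p Y ∘ σ := by
  have hZ : pairZ β (Y ∘ σ) = pairZ β Y := by
    rw [pairZ_eq_pairEnergy, pairZ_eq_pairEnergy, pairEnergy_comp_perm β fun _ _ _ => rfl]
  have hrep : pairGradient (fun _ _ => 1) (fun x => β x * lbd β x) (Y ∘ σ)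
      = pairGradient (fun _ _ => 1) (fun x => β x * lbd β x) Y ∘ σ :=
    pairGradient_comp_perm _ (fun _ _ _ => rfl) Y
  rw [flowField_eq_sub, flowField_eq_sub, hZ, hrep, pairGradient_comp_perm _ hσ]
  rfl

theorem IsGradFlow.hasDerivWithinAt [NormedSpace ℝ E] {Y : ℝ → Fin n → E}
    (hY : IsGradFlow β p Y) :
    ∀ t ∈ Set.Ici 0, HasDerivWithinAt Y (flowField β p (Y t)) (Set.Ici 0) t :=
  fun t ht => hasDerivWithinAt_pi.2 fun i => hY i t ht

theorem IsGradFlow.comp_perm [NormedSpace ℝ E] {Y : ℝ → Fin n → E} (hY : IsGradFlow β p Y)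
    {σ : Equiv.Perm (Fin n)} (hσ : ∀ i j, i ≠ j → p (σ i) (σ j) = p i j) :
    IsGradFlow β p fun t => Y t ∘ σ := by
  intro i t ht
  have hfield := congrFun (flowField_comp_perm β hσ (Y t)) i
  exact (hY (σ i) t ht).congr_deriv hfield.symm

variable [InnerProductSpace ℝ E] [Nontrivial (Fin n)]

theorem contDiff_flowField (hβpos : ∀ x, 0 ≤ x → 0 < β x) (hβ : ContDiffOn ℝ 2 β (Set.Ici 0))
    (p : Fin n → Fin n → ℝ) : ContDiff ℝ 1 (flowField (E := E) β p) := by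
  have hβ₁ : ContDiffOn ℝ 1 β (Set.Ici 0) := hβ.of_le one_le_two
  have hlbd : ContDiffOn ℝ 1 (lbd β) (Set.Ici 0) := contDiffOn_lbd hβpos hβ
  have hZ : ContDiff ℝ 1 (pairZ (E := E) (n := n) β) := by
    rw [funext (pairZ_eq_pairEnergy β)]
    exact contDiff_pairEnergy _ hβ₁
  rw [funext (flowField_eq_sub (E := E) β p)]
  exact (contDiff_pairGradient p hlbd).sub
    ((hZ.inv fun Y => (pairZ_pos hβpos Y).ne').smul (contDiff_pairGradient _ (hβ₁.mul hlbd)))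

theorem hasDerivWithinAt_crossEntropy (hβpos : ∀ x, 0 ≤ x → 0 < β x)
    (hβ : DifferentiableOn ℝ β (Set.Ici 0)) (hp : ∀ i j, p i j = p j i) {Y : ℝ → Fin n → E}
    {V : Fin n → E} {S : Set ℝ} {t : ℝ} (hY : HasDerivWithinAt Y V S t) :
    HasDerivWithinAt (fun u => crossEntropy β p (Y u))
      (-∑ i, inner ℝ (flowField β p (Y t) i) (V i)) S t := by
  have hZ := hasDerivWithinAt_pairEnergy (w := fun _ _ => 1) (fun _ _ => rfl)
    (hasDerivWithinAt_mul_lbd hβpos hβ) hY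
  have hattr := hasDerivWithinAt_pairEnergy hp (hasDerivWithinAt_log_lbd hβpos hβ) hY
  simp only [← pairZ_eq_pairEnergy] at hZ
  refine ((hZ.log (pairZ_pos hβpos (Y t)).ne').fun_sub hattr).congr_deriv ?_
  simp only [flowField_eq_sub, Pi.sub_apply, Pi.smul_apply, inner_sub_left, real_inner_smul_left,
    Finset.sum_sub_distrib, ← Finset.mul_sum]
  ring

namespace IsGradFlow

theorem antitoneOn_crossEntropy {Y : ℝ → Fin n → E} (hY : IsGradFlow β p Y)
    (hβpos : ∀ x, 0 ≤ x → 0 < β x) (hβ : DifferentiableOn ℝ β (Set.Ici 0))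
    (hp : ∀ i j, p i j = p j i) :
    AntitoneOn (fun t => crossEntropy β p (Y t)) (Set.Ici 0) := by
  have hderiv := fun t ht => hasDerivWithinAt_crossEntropy hβpos hβ hp (hY.hasDerivWithinAt t ht)
  exact antitoneOn_of_hasDerivWithinAt_nonpos (convex_Ici 0)
    (fun t ht => (hderiv t ht).continuousWithinAt)
    (fun t ht => (hderiv t (interior_subset ht)).mono interior_subset)
    fun t _ => neg_nonpos.2 (Finset.sum_nonneg fun i _ => real_inner_self_nonneg)

theorem eqOn_Ici {Y Y' : ℝ → Fin n → E} (hY : IsGradFlow β p Y) (hY' : IsGradFlow β p Y')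
    (hβpos : ∀ x, 0 ≤ x → 0 < β x) (hβ : ContDiffOn ℝ 2 β (Set.Ici 0)) (h0 : Y 0 = Y' 0) :
    Set.EqOn Y Y' (Set.Ici 0) :=
  eqOn_Ici_of_hasDerivWithinAt_of_locallyLipschitz (contDiff_flowField hβpos hβ p).locallyLipschitz
    hY.hasDerivWithinAt hY'.hasDerivWithinAt h0

theorem eq_comp_perm {Y : ℝ → Fin n → E} (hY : IsGradFlow β p Y) (hβpos : ∀ x, 0 ≤ x → 0 < β x)
    (hβ : ContDiffOn ℝ 2 β (Set.Ici 0)) {σ : Equiv.Perm (Fin n)}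
    (hσ : ∀ i j, i ≠ j → p (σ i) (σ j) = p i j) (h0 : Y 0 = Y 0 ∘ σ) {t : ℝ} (ht : 0 ≤ t) :
    Y t = Y t ∘ σ :=
  hY.eqOn_Ici (hY.comp_perm hσ) hβpos hβ h0 ht

theorem exists_norm_sub_le_of_le_pairZ {Y : ℝ → Fin n → E} (hY : IsGradFlow β p Y)
    (hβpos : ∀ x, 0 ≤ x → 0 < β x) (hβ : DifferentiableOn ℝ β (Set.Ici 0))
    (hβlim : Tendsto β atTop (𝓝 0)) (hp : ∀ i j, p i j = p j i) (hppos : ∀ i j, i ≠ j → 0 < p i j)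
    {c : ℝ} (hc : 0 < c) (hZ : ∀ t, 0 ≤ t → c ≤ pairZ β (Y t)) :
    ∃ C, 0 < C ∧ ∀ t, 0 ≤ t → ∀ i j, ‖Y t i - Y t j‖ ≤ C := by
  have hcont : ContinuousOn (fun x => -Real.log (β x)) (Set.Ici 0) :=
    (hβ.continuousOn.log fun x hx => (hβpos x hx).ne').neg
  have hlim : Tendsto (fun x => -Real.log (β x)) atTop atTop :=
    tendsto_neg_atBot_atTop.comp <| Real.tendsto_log_nhdsGT_zero.comp <|
      tendsto_nhdsWithin_iff.2 ⟨hβlim, (eventually_ge_atTop 0).mono hβpos⟩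
  obtain ⟨C, hCpos, hC⟩ := exists_norm_sub_le_of_pairEnergy_le (E := E) hppos hcont hlim
    (crossEntropy β p (Y 0) - Real.log c)
  refine ⟨C, hCpos, fun t ht => hC (Y t) ?_⟩
  calc pairEnergy p (fun x => -Real.log (β x)) (Y t)
      = crossEntropy β p (Y t) - Real.log (pairZ β (Y t)) := by
        rw [pairEnergy_neg, crossEntropy, sub_sub_cancel_left]
    _ ≤ crossEntropy β p (Y 0) - Real.log c :=
        sub_le_sub (hY.antitoneOn_crossEntropy hβpos hβ hp Set.self_mem_Ici ht ht)
          (Real.log_le_log hc (hZ t ht))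

end IsGradFlow

end Flow

theorem apply_swap_swap_of_symm {ι R : Type*} [DecidableEq ι] {p : ι → ι → R}
    (hp : ∀ i j, p i j = p j i) {a b : ι} (hpab : ∀ j, j ≠ a → j ≠ b → p a j = p b j)
    {i j : ι} (hij : i ≠ j) : p (Equiv.swap a b i) (Equiv.swap a b j) = p i j := by
  grind

theorem doubled_point_diameter_bound_general {n : ℕ}
    {E : Type*} [NormedAddCommGroup E] [InnerProductSpace ℝ E]
    {p : Fin n → Fin n → ℝ} (hp : ∀ i j, p i j = p j i) (hppos : ∀ i j, i ≠ j → 0 < p i j)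
    {β : ℝ → ℝ} (hβpos : ∀ x, 0 ≤ x → 0 < β x) (hβ : ContDiffOn ℝ 2 β (Set.Ici 0))
    (hβlim : Tendsto β atTop (𝓝 0)) {Y : ℝ → Fin n → E} (hY : IsGradFlow β p Y)
    {a b : Fin n} (hab : a ≠ b) (hpab : ∀ j, j ≠ a → j ≠ b → p a j = p b j)
    (hinit : Y 0 a = Y 0 b) :
    ∃ C : ℝ, 0 < C ∧ ∀ t : ℝ, 0 ≤ t → diamY (Y t) ≤ C := by
  have : Nontrivial (Fin n) := ⟨a, b, hab⟩
  have hswap : Y 0 = Y 0 ∘ Equiv.swap a b := by grind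
  have hcoincide : ∀ t, 0 ≤ t → Y t a = Y t b := fun t ht => by
    simpa using congrFun
      (hY.eq_comp_perm hβpos hβ (fun _ _ => apply_swap_swap_of_symm hp hpab) hswap ht) a
  have hZ : ∀ t, 0 ≤ t → β 0 ≤ pairZ β (Y t) := fun t ht => by
    simpa [hcoincide t ht] using le_pairZ hβpos (Y t) hab
  obtain ⟨C, hCpos, hC⟩ := hY.exists_norm_sub_le_of_le_pairZ hβpos
    (hβ.differentiableOn two_ne_zero) hβlim hp hppos (hβpos 0 le_rfl) hZ
  refine ⟨C, hCpos, fun t ht => Metric.diam_le_of_forall_dist_le hCpos.le ?_⟩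
  rintro _ ⟨i, rfl⟩ _ ⟨j, rfl⟩
  exact (dist_eq_norm _ _).trans_le (hC t ht i j)

/-- **Theorem 1.5.** Under assumptions (A1) and (A2) on `γ = 1/β`, if `p_{1j} = p_{2j}` for
all `j > 2` and the first two points initially coincide, then `diam Y(t)` stays bounded. -/
theorem doubled_point_diameter_bound
    (s n : ℕ) (hs : 1 ≤ s) (hn : s + 1 < n)
    (p : Fin n → Fin n → ℝ)
    (hsymm : ∀ i j, p i j = p j i)
    (hppos : ∀ i j, i ≠ j → 0 < p i j)
    (hpsum : (∑ i, ∑ j, if i ≠ j then p i j else (0 : ℝ)) = 1)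
    (β : ℝ → ℝ)
    (hβpos : ∀ x, 0 ≤ x → 0 < β x)
    (hβsmooth : ContDiffOn ℝ (⊤ : ℕ∞) β (Set.Ici 0))
    (hβanti : AntitoneOn β (Set.Ici 0))
    (hβbdd : ∃ M : ℝ, ∀ x, 0 ≤ x → |lbd β x| ≤ M)
    -- (A1): `γ = 1/β` is convex on `[0,∞)`, `γ(0) = 1`, `γ' ≥ 0`, and `γ(x) → ∞`.
    (hγconv : ConvexOn ℝ (Set.Ici 0) fun x => (β x)⁻¹)
    (hγ0 : (β 0)⁻¹ = 1)
    (hγder : ∀ x, 0 ≤ x → 0 ≤ derivWithin (fun y => (β y)⁻¹) (Set.Ici 0) x)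
    (hγtop : Tendsto (fun x => (β x)⁻¹) atTop atTop)
    -- (A2): `sup_{x ≥ 0} (log γ)'(x) < ∞`.
    (hA2 : ∃ M : ℝ, ∀ x, 0 ≤ x →
      derivWithin (fun y => Real.log ((β y)⁻¹)) (Set.Ici 0) x ≤ M)
    (Y : ℝ → Fin n → EuclideanSpace ℝ (Fin s))
    (hflow : IsGradFlow β p Y)
    -- `p_{1j} = p_{2j}` for all `j > 2` (indices `0`, `1` in 0-based numbering)
    (hp12 : ∀ j : Fin n, 1 < (j : ℕ) → p ⟨0, by omega⟩ j = p ⟨1, by omega⟩ j)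
    -- `y_1 = y_2` initially
    (hinit : Y 0 ⟨0, by omega⟩ = Y 0 ⟨1, by omega⟩) :
    ∃ C : ℝ, 0 < C ∧ ∀ t : ℝ, 0 ≤ t → diamY (Y t) ≤ C := by
  exact doubled_point_diameter_bound_general hsymm hppos hβpos (contDiffOn_infty.1 hβsmooth 2)
    (inv_inv β ▸ hγtop.inv_tendsto_atTop) hflow (by simp) (by grind) hinit
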